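/- Let F be a field, τ : F → F a ring automorphism, k := F^τ its fixed field, and K a subfield of F with τ(K) = K and k ⊆ K. Let A ∈ GL_d(K), U ∈ GL_d(F) with τ(U) = A·U, and R = K[U, (det U)⁻¹] ⊆ F the corresponding Picard-Vessiot ring. Fix f ∈ R and suppose a₀, …, aₘ ∈ K with aₘ ≠ 0 are such that a₀f + a₁τ(f) + ⋯ + aₘτᵐ(f) = 0, and that m is minimal: there is no relation b₀f + b₁τ(f) + ⋯ + b_{m'}τ^{m'}(f) = 0 with b₀, …, b_{m'} ∈ K not all zero and m' < m. Then the set W = {y ∈ R : a₀y + a₁τ(y) + ⋯ + aₘτᵐ(y) = 0} is a k-vector space of dimension exactly m. -/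

import Mathlib

set_option synthInstance.maxHeartbeats 400000
set_option maxHeartbeats 1000000

/-!
Upper bound: if `y₁, …, yₙ` are linearly independent over `k`, their Casoratian matrix `(τⁱ yⱼ)` is
invertible, so no nonzero operator with `n` coefficients kills all of them.

Lower bound: on `F ⊗[K] F` put the endomorphism `τ ⊗ τ`. Since `U ⊗ 1` and `1 ⊗ U` solve the same
system, the entries of `(U ⊗ 1)⁻¹ (1 ⊗ U)` are invariant, so that `1 ⊗ f = ∑ r_c • c` with `r_c ∈ R`
and invariant `c` that are independent over `k`, hence over `F`. Applying powers of `τ ⊗ τ` and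
comparing coefficients, `∑ bᵢ ⊗ τⁱ f = 0` if and only if the operator with coefficients `b` kills
every `r_c`. Thus all `r_c` are solutions of the minimal equation, and an operator of order less
than `m` that kills all solutions in `R` has `∑ bᵢ ⊗ τⁱ f = 0`, whence `b = 0` by minimality. So the
`m`-dimensional space of such operators embeds into `Hom_k(W, F)`, and `m ≤ dim W`.
-/

open scoped TensorProduct

section LinearIndependence

variable {k F : Type*} [Field k] [Field F] [Algebra k F]

theorem linearIndependent_of_semilinear_fixed {T ι : Type*} [AddCommGroup T] [Module F T]
    [Module k T] [IsScalarTower k F T] {τ : F →+* F}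
    (hfix : ∀ x, τ x = x → x ∈ (algebraMap k F).range) (σ : T →ₛₗ[τ] T) {v : ι → T}
    (hσv : ∀ i, σ (v i) = v i) (hv : LinearIndependent k v) : LinearIndependent F v := by
  classical
  suffices h : ∀ s : Finset ι, LinearIndepOn F v (s : Set ι) from
    linearIndependent_iff_finset_linearIndependent.2 h
  intro s
  induction s using Finset.induction_on with
  | empty => simp
  | insert i s hi ih =>
    rw [Finset.coe_insert, linearIndepOn_insert (by simpa using hi)]
    refine ⟨ih, fun hmem => ?_⟩
    obtain ⟨g, hg⟩ := Submodule.mem_span_image_finset_iff_exists_fun F |>.1 hmem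
    have hσg : ∑ j : s, τ (g j) • v j = v i := by
      simpa only [map_sum, LinearMap.map_smulₛₗ, hσv] using congrArg σ hg
    have hsub : ∑ j : s, (τ (g j) - g j) • v j = 0 := by
      simp only [sub_smul, Finset.sum_sub_distrib, hσg, hg, sub_self]
    have hgk (j : s) : g j ∈ (algebraMap k F).range :=
      hfix _ (sub_eq_zero.1 (Fintype.linearIndependent_iff.1 ih _ hsub j))
    have hmem_k : v i ∈ Submodule.span k (v '' s) := by
      rw [← hg]
      refine sum_mem fun j _ => ?_
      obtain ⟨c, hc⟩ := hgk j
      rw [← hc, algebraMap_smul]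
      exact Submodule.smul_mem _ c (Submodule.subset_span ⟨j, j.2, rfl⟩)
    exact hv.notMem_span_image (by simpa using hi) hmem_k

theorem linearIndependent_iterate {τ : F →ₐ[k] F}
    (hfix : ∀ x, τ x = x → x ∈ (algebraMap k F).range) {n : ℕ} {y : Fin n → F}
    (hy : LinearIndependent k y) :
    LinearIndependent F fun (j : Fin n) (i : Fin n) => τ^[(i : ℕ)] (y j) := by
  induction n with
  | zero => exact linearIndependent_empty_type
  | succ n ih =>
    obtain ⟨hy_tail, hy_zero⟩ := linearIndependent_finSucc.1 hy
    refine linearIndependent_finSucc.2 ⟨?_, fun hmem => hy_zero ?_⟩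
    · exact LinearIndependent.of_comp (LinearMap.funLeft F F Fin.castSucc) (ih hy_tail)
    obtain ⟨c, hc⟩ := Submodule.mem_span_range_iff_exists_fun F |>.1 hmem
    have hrow (i : Fin (n + 1)) : ∑ j, c j * τ^[(i : ℕ)] (y j.succ) = τ^[(i : ℕ)] (y 0) := by
      simpa [Fin.tail] using congrFun hc i
    have hτ_tail : LinearIndependent k fun j : Fin n => τ (y j.succ) :=
      hy_tail.map' τ.toLinearMap (LinearMap.ker_eq_bot.2 τ.injective)
    -- Comparing `τ` of row `i` with row `i + 1` says nothing about row `0`, so the induction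
    -- hypothesis is applied to `τ ∘ y`.
    have hsub : ∑ j, (τ (c j) - c j) • (fun i : Fin n => τ^[(i : ℕ)] (τ (y j.succ))) = 0 := by
      ext i
      have happly := congrArg τ (hrow i.castSucc)
      have hnext := hrow i.succ
      simp only [Fin.val_castSucc, Fin.val_succ, map_sum, map_mul,
        ← Function.iterate_succ_apply' τ] at happly hnext
      simp only [Finset.sum_apply, Pi.smul_apply, smul_eq_mul, sub_mul, Finset.sum_sub_distrib,
        ← Function.iterate_succ_apply, happly, hnext, sub_self, Pi.zero_apply]
    have hck (j : Fin n) : c j ∈ (algebraMap k F).range :=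
      hfix _ (sub_eq_zero.1 (Fintype.linearIndependent_iff.1 (ih hτ_tail) _ hsub j))
    choose c' hc' using hck
    refine Submodule.mem_span_range_iff_exists_fun k |>.2 ⟨c', ?_⟩
    simpa [Algebra.smul_def, hc', Fin.tail] using hrow 0

end LinearIndependence

section DifferenceOperator

variable {k F : Type*} [Field k] [Field F] [Algebra k F]

/-- The difference operator `y ↦ ∑ i < n, b i * τ^i y` with coefficient vector `b`, of order less
than `n`. It is `k`-linear in `y`, and the bundled map records that it is `F`-linear in `b`. -/
noncomputable def differenceOperator (τ : F →ₐ[k] F) (n : ℕ) :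
    (Fin n → F) →ₗ[F] F →ₗ[k] F :=
  Fintype.linearCombination F fun i : Fin n => τ.toLinearMap ^ (i : ℕ)

theorem differenceOperator_apply (τ : F →ₐ[k] F) {n : ℕ} (b : Fin n → F) (y : F) :
    differenceOperator τ n b y = ∑ i, b i * τ^[(i : ℕ)] y := by
  simp [differenceOperator, Fintype.linearCombination_apply, Module.End.pow_apply]

theorem eq_zero_of_differenceOperator_apply_eq_zero {τ : F →ₐ[k] F}
    (hfix : ∀ x, τ x = x → x ∈ (algebraMap k F).range) {n : ℕ} {b y : Fin n → F}
    (hy : LinearIndependent k y) (hb : ∀ j, differenceOperator τ n b (y j) = 0) : b = 0 := by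
  let casoratian : Matrix (Fin n) (Fin n) F := .of fun j i => τ^[(i : ℕ)] (y j)
  have hunit : IsUnit casoratian :=
    Matrix.linearIndependent_rows_iff_isUnit.1 (linearIndependent_iterate hfix hy)
  refine Matrix.mulVec_injective_of_isUnit hunit ?_
  ext j
  simpa [casoratian, Matrix.mulVec, dotProduct, differenceOperator_apply, mul_comm] using hb j

theorem rank_ker_differenceOperator_le {τ : F →ₐ[k] F}
    (hfix : ∀ x, τ x = x → x ∈ (algebraMap k F).range) {m : ℕ} {a : Fin (m + 1) → F}
    (ha : a ≠ 0) : Module.rank k (differenceOperator τ (m + 1) a).ker ≤ m := by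
  by_contra! hlt
  have hle : ((m + 1 : ℕ) : Cardinal) ≤ Module.rank k (differenceOperator τ (m + 1) a).ker := by
    exact_mod_cast Cardinal.natCast_add_one_le_iff.2 hlt
  obtain ⟨y, hy⟩ := Module.le_rank_iff.1 hle
  exact ha (eq_zero_of_differenceOperator_apply_eq_zero hfix
    (hy.map' (Submodule.subtype _) (Submodule.ker_subtype _)) fun j => (y j).2)

theorem le_finrank_of_forall_differenceOperator_eq_zero {τ : F →ₐ[k] F} {W : Submodule k F}
    [Module.Finite k W] {m : ℕ}
    (hW : ∀ b : Fin m → F, (∀ y ∈ W, differenceOperator τ m b y = 0) → b = 0) :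
    m ≤ Module.finrank k W := by
  let restrict : (Fin m → F) →ₗ[F] W →ₗ[k] F :=
    LinearMap.lcomp F F W.subtype ∘ₗ differenceOperator τ m
  have hrestrict : Function.Injective restrict := (injective_iff_map_eq_zero restrict).2
    fun b hb => hW b fun y hy => LinearMap.congr_fun hb ⟨y, hy⟩
  simpa [Module.finrank_linearMap_self] using
    LinearMap.finrank_le_finrank_of_injective hrestrict

end DifferenceOperator

section Invariants

variable {T : Type*} [CommRing T]

/-- The subring of elements fixed by a ring endomorphism: the constants of the difference ring
`(T, σ)`. -/
abbrev invariants (σ : T →+* T) : Subring T := σ.eqLocus (RingHom.id T)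

theorem exists_linearIndependent_adjoin_submonoid_eq_span (k E : Type*) [Field k] [CommRing E]
    [Algebra k E] [Algebra E T] [Algebra k T] [IsScalarTower k E T] (C : Submonoid T) :
    ∃ s ⊆ (C : Set T), LinearIndependent k ((↑) : s → T) ∧
      (Algebra.adjoin E (C : Set T)).toSubmodule = Submodule.span E s := by
  obtain ⟨s, hsC, hspan, hs⟩ := exists_linearIndependent k (C : Set T)
  refine ⟨s, hsC, hs, ?_⟩
  rw [Algebra.adjoin_eq_span, Submonoid.closure_eq, ← Submodule.span_span_of_tower k E, ← hspan,
    Submodule.span_span_of_tower]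

theorem map_inv_mul_eq_self_of_map_eq_mul {n : Type*} [Fintype n] [DecidableEq n] (σ : T →+* T)
    {A X Y : Matrix n n T} (hXdet : IsUnit X.det) (hX : X.map σ = A * X) (hY : Y.map σ = A * Y) :
    (X⁻¹ * Y).map σ = X⁻¹ * Y := by
  have hcancel : X * (X⁻¹ * Y) = Y := X.mul_nonsing_inv_cancel_left Y hXdet
  have hσX : IsUnit (X.map σ) :=
    (((Matrix.isUnit_iff_isUnit_det X).2 hXdet).map σ.mapMatrix :)
  refine hσX.mul_left_cancel ?_
  rw [← Matrix.map_mul, hcancel, hY, hX, mul_assoc, hcancel]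

variable {k K F : Type*} [Field k] [Field K] [Field F] [Algebra k K] [Algebra K F] [Algebra k F]
  [IsScalarTower k K F] [Algebra F T]

theorem exists_subset_sum_smul_iterate_eq_zero_iff {τ : F →ₐ[k] F}
    (hfix : ∀ x, τ x = x → x ∈ (algebraMap k F).range) {σ : T →+* T}
    (hσ : ∀ x, σ (algebraMap F T x) = algebraMap F T (τ x)) {R : Subalgebra K F} {t : T}
    (ht : t ∈ Algebra.adjoin R (invariants σ : Set T)) :
    ∃ S ⊆ (R : Set F), ∀ (n : ℕ) (b : Fin n → F),
      ∑ i, b i • σ^[(i : ℕ)] t = 0 ↔ ∀ r ∈ S, differenceOperator τ n b r = 0 := by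
  let _ : Algebra k T := Algebra.compHom T (algebraMap k F)
  have : IsScalarTower k F T := .of_algebraMap_eq' rfl
  have : IsScalarTower k R T := .of_algebraMap_eq' rfl
  let σ' : T →ₛₗ[(τ : F →+* F)] T :=
    { σ with map_smul' := fun x t => by simp [Algebra.smul_def, hσ] }
  obtain ⟨s, hsC, hs, hspan⟩ :=
    exists_linearIndependent_adjoin_submonoid_eq_span k R (invariants σ).toSubmonoid
  have hσs (c : s) : σ c = c := hsC c.2
  have hsF : LinearIndependent F ((↑) : s → T) :=
    linearIndependent_of_semilinear_fixed hfix σ' hσs hs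
  have ht_span : t ∈ Submodule.span R s := hspan ▸ ht
  obtain ⟨r, hr⟩ : ∃ r : s →₀ R, r.sum (fun c x => x • (c : T)) = t := by
    simpa using Finsupp.mem_span_range_iff_exists_finsupp (v := ((↑) : s → T)).1 (by simpa)
  have hiterate (i : ℕ) : σ^[i] t = ∑ c ∈ r.support, τ^[i] (r c : F) • (c : T) := by
    induction i with
    | zero => exact hr.symm
    | succ i ih =>
      simp only [Function.iterate_succ_apply', ih, map_sum, Algebra.smul_def, map_mul, hσ, hσs]
  refine ⟨(fun c => (r c : F)) '' r.support, ?_, fun n b => ?_⟩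
  · rintro _ ⟨c, -, rfl⟩
    exact (r c).2
  have hsum : ∑ i, b i • σ^[(i : ℕ)] t =
      ∑ c ∈ r.support, differenceOperator τ n b (r c) • (c : T) := by
    simp only [hiterate, differenceOperator_apply, Finset.smul_sum, Finset.sum_smul, smul_smul]
    exact Finset.sum_comm
  rw [hsum, Set.forall_mem_image]
  exact ⟨fun h => linearIndependent_iff'.1 hsF _ _ h,
    fun h => Finset.sum_eq_zero fun c hc => by rw [h hc, zero_smul]⟩

end Invariants

section PicardVessiot

variable {k K F : Type*} [Field k] [Field K] [Field F] [Algebra k K] [Algebra K F] [Algebra k F]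
  [IsScalarTower k K F] {n : Type*} [Fintype n] [DecidableEq n]

variable (K) in
/-- The ring `K[U, (det U)⁻¹] ⊆ F`, which is the Picard-Vessiot ring of `τ(Y) = AY` when `U` is a
fundamental solution matrix. -/
def picardVessiotRing (U : Matrix n n F) : Subalgebra K F :=
  Algebra.adjoin K ((Set.range fun p : n × n => U p.1 p.2) ∪ {(U.det)⁻¹})

theorem entry_mem_picardVessiotRing (U : Matrix n n F) (i j : n) : U i j ∈ picardVessiotRing K U :=
  Algebra.subset_adjoin (.inl ⟨(i, j), rfl⟩)

theorem inv_det_mem_picardVessiotRing (U : Matrix n n F) : (U.det)⁻¹ ∈ picardVessiotRing K U :=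
  Algebra.subset_adjoin (.inr rfl)

section Coaction

variable {T : Type*} [CommRing T] [Algebra K T] {τ : F →+* F} {σ : T →+* T} {j : F →ₐ[K] T}

theorem map_map_algHom_eq_mul {l : Type*} [Fintype l] {A : Matrix l l K} {U : Matrix l l F}
    (hj : ∀ x, σ (j x) = j (τ x)) (hU : U.map τ = A.map (algebraMap K F) * U) :
    (U.map j).map σ = A.map (algebraMap K T) * U.map j :=
  calc (U.map j).map σ = (U.map τ).map j := by ext p q; exact hj _
    _ = (A.map (algebraMap K F)).map j * U.map j := by rw [hU, Matrix.map_mul]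
    _ = A.map (algebraMap K T) * U.map j := by
      congr 1
      ext p q
      exact j.commutes _

variable [Algebra F T] [IsScalarTower K F T] {A : Matrix n n K} {U : Matrix n n F}

theorem algHom_entry_mem_adjoin_invariants
    (hσ : ∀ x, σ (algebraMap F T x) = algebraMap F T (τ x)) (hj : ∀ x, σ (j x) = j (τ x))
    (hUdet : U.det ≠ 0) (hU : U.map τ = A.map (algebraMap K F) * U) (p q : n) :
    j (U p q) ∈ Algebra.adjoin (picardVessiotRing K U) (invariants σ : Set T) := by
  let X : Matrix n n T := U.map (IsScalarTower.toAlgHom K F T)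
  have hXdet : IsUnit X.det := by
    rw [show X.det = algebraMap F T U.det from (RingHom.map_det _ U).symm]
    exact hUdet.isUnit.map _
  have hfixed : (X⁻¹ * U.map j).map σ = X⁻¹ * U.map j :=
    map_inv_mul_eq_self_of_map_eq_mul σ hXdet (map_map_algHom_eq_mul hσ hU)
      (map_map_algHom_eq_mul hj hU)
  have hentry : ∑ l, algebraMap F T (U p l) * (X⁻¹ * U.map j) l q = j (U p q) :=
    congrFun₂ (X.mul_nonsing_inv_cancel_left (U.map j) hXdet) p q
  rw [← hentry]
  exact sum_mem fun l _ => mul_mem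
    (algebraMap_mem _ (⟨_, entry_mem_picardVessiotRing U p l⟩ : picardVessiotRing K U))
    (Algebra.subset_adjoin (congrFun₂ hfixed l q))

theorem algHom_inv_det_mem_adjoin_invariants
    (hσ : ∀ x, σ (algebraMap F T x) = algebraMap F T (τ x)) (hj : ∀ x, σ (j x) = j (τ x))
    (hUdet : U.det ≠ 0) (hU : U.map τ = A.map (algebraMap K F) * U) :
    j (U.det)⁻¹ ∈ Algebra.adjoin (picardVessiotRing K U) (invariants σ : Set T) := by
  have hτdet : τ U.det = algebraMap K F A.det * U.det := by
    rw [RingHom.map_det, RingHom.map_det, ← Matrix.det_mul]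
    exact congrArg Matrix.det hU
  have hAdet : A.det ≠ 0 := by
    rintro hA
    exact hUdet (by simpa [hA] using hτdet)
  have hfixed : σ (algebraMap F T U.det * j (U.det)⁻¹) = algebraMap F T U.det * j (U.det)⁻¹ :=
    calc σ (algebraMap F T U.det * j (U.det)⁻¹)
        = algebraMap F T (τ U.det) * j (τ U.det)⁻¹ := by rw [map_mul, hσ, hj, map_inv₀]
      _ = algebraMap K T (A.det * A.det⁻¹) * (algebraMap F T U.det * j (U.det)⁻¹) := by
        rw [hτdet, mul_inv, ← map_inv₀ (algebraMap K F)]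
        simp only [map_mul, j.commutes, ← IsScalarTower.algebraMap_apply]
        ring
      _ = algebraMap F T U.det * j (U.det)⁻¹ := by rw [mul_inv_cancel₀ hAdet, map_one, one_mul]
  have hdecomp : algebraMap F T (U.det)⁻¹ * (algebraMap F T U.det * j (U.det)⁻¹) = j (U.det)⁻¹ := by
    rw [← mul_assoc, ← map_mul, inv_mul_cancel₀ hUdet, map_one, one_mul]
  rw [← hdecomp]
  exact mul_mem
    (algebraMap_mem _ (⟨_, inv_det_mem_picardVessiotRing U⟩ : picardVessiotRing K U))
    (Algebra.subset_adjoin hfixed)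

theorem algHom_mem_adjoin_invariants
    (hσ : ∀ x, σ (algebraMap F T x) = algebraMap F T (τ x)) (hj : ∀ x, σ (j x) = j (τ x))
    (hUdet : U.det ≠ 0) (hU : U.map τ = A.map (algebraMap K F) * U) {f : F}
    (hf : f ∈ picardVessiotRing K U) :
    j f ∈ Algebra.adjoin (picardVessiotRing K U) (invariants σ : Set T) := by
  induction hf using Algebra.adjoin_induction with
  | mem x hx =>
    rcases hx with ⟨⟨p, q⟩, rfl⟩ | rfl
    · exact algHom_entry_mem_adjoin_invariants hσ hj hUdet hU p q
    · exact algHom_inv_det_mem_adjoin_invariants hσ hj hUdet hU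
  | algebraMap x =>
    rw [j.commutes, IsScalarTower.algebraMap_apply K F T]
    exact algebraMap_mem _ (algebraMap K (picardVessiotRing K U) x)
  | add x y _ _ hx hy => exact map_add j x y ▸ add_mem hx hy
  | mul x y _ _ hx hy => exact map_mul j x y ▸ mul_mem hx hy

end Coaction

theorem exists_subset_sum_tmul_iterate_eq_zero_iff {τ : F →ₐ[k] F}
    (hfix : ∀ x, τ x = x → x ∈ (algebraMap k F).range) {τK : K →+* K}
    (hτK : ∀ x, τ (algebraMap K F x) = algebraMap K F (τK x)) {A : Matrix n n K}
    {U : Matrix n n F} (hUdet : U.det ≠ 0) (hU : U.map τ = A.map (algebraMap K F) * U) {f : F}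
    (hf : f ∈ picardVessiotRing K U) :
    ∃ S ⊆ (picardVessiotRing K U : Set F), ∀ (p : ℕ) (b : Fin p → F),
      ∑ i, b i ⊗ₜ[K] τ^[(i : ℕ)] f = 0 ↔ ∀ r ∈ S, differenceOperator τ p b r = 0 := by
  have hτK' : (τ : F →+* F).comp (algebraMap K F) = (algebraMap K F).comp τK := RingHom.ext hτK
  let σ : F ⊗[K] F →+* F ⊗[K] F := Algebra.TensorProduct.mapRingHom τK τ τ hτK' hτK'
  have hσ_tmul (x y : F) : σ (x ⊗ₜ y) = τ x ⊗ₜ τ y :=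
    Algebra.TensorProduct.mapRingHom_tmul _ _ _ _ _ x y
  have hσ_left (x : F) :
      σ (algebraMap F (F ⊗[K] F) x) = algebraMap F (F ⊗[K] F) (τ x) := by
    simp [Algebra.TensorProduct.algebraMap_apply, hσ_tmul]
  have hσ_right (x : F) : σ (1 ⊗ₜ x) = 1 ⊗ₜ τ x := by rw [hσ_tmul, map_one]
  have hmem : 1 ⊗ₜ f ∈ Algebra.adjoin (picardVessiotRing K U) (invariants σ : Set (F ⊗[K] F)) :=
    algHom_mem_adjoin_invariants (j := Algebra.TensorProduct.includeRight) hσ_left hσ_right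
      hUdet hU hf
  have hiterate (i : ℕ) : σ^[i] (1 ⊗ₜ f) = 1 ⊗ₜ τ^[i] f :=
    (Function.Semiconj.iterate_right (f := fun x : F => (1 : F) ⊗ₜ[K] x)
      (fun x => (hσ_right x).symm) i f).symm
  simpa only [hiterate, TensorProduct.smul_tmul', smul_eq_mul, mul_one] using
    exists_subset_sum_smul_iterate_eq_zero_iff hfix hσ_left hmem

end PicardVessiot

section SolutionSpace

variable {k K F : Type*} [Field k] [Field K] [Field F] [Algebra k K] [Algebra K F] [Algebra k F]
  [IsScalarTower k K F] {τ : F →ₐ[k] F}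

/-- The `k`-vector space of solutions in `R` of the difference equation with coefficient vector
`a`. -/
noncomputable def solutionSpace (τ : F →ₐ[k] F) (R : Subalgebra K F) {p : ℕ} (a : Fin p → F) :
    Submodule k F :=
  R.toSubmodule.restrictScalars k ⊓ (differenceOperator τ p a).ker

theorem coe_solutionSpace (τ : F →ₐ[k] F) (R : Subalgebra K F) {p : ℕ} (a : Fin p → F) :
    (solutionSpace τ R a : Set F) = {y | y ∈ R ∧ ∑ i, a i * τ^[(i : ℕ)] y = 0} := by
  ext y
  simp only [← differenceOperator_apply]
  rfl

theorem rank_solutionSpace_le (hfix : ∀ x, τ x = x → x ∈ (algebraMap k F).range)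
    (R : Subalgebra K F) {m : ℕ} {a : Fin (m + 1) → F} (ha : a ≠ 0) :
    Module.rank k (solutionSpace τ R a) ≤ m :=
  (Submodule.rank_mono inf_le_right).trans (rank_ker_differenceOperator_le hfix ha)

variable {n : Type*} [Fintype n] [DecidableEq n]

theorem eq_zero_of_differenceOperator_eq_zero_on_solutionSpace
    (hfix : ∀ x, τ x = x → x ∈ (algebraMap k F).range) {τK : K →+* K}
    (hτK : ∀ x, τ (algebraMap K F x) = algebraMap K F (τK x)) {A : Matrix n n K}
    {U : Matrix n n F} (hUdet : U.det ≠ 0) (hU : U.map τ = A.map (algebraMap K F) * U) {f : F}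
    (hf : f ∈ picardVessiotRing K U) {p : ℕ} {a : Fin p → K}
    (hrel : ∑ i, algebraMap K F (a i) * τ^[(i : ℕ)] f = 0) {m : ℕ}
    (hmin : LinearIndependent K fun i : Fin m => τ^[(i : ℕ)] f) {b : Fin m → F}
    (hb : ∀ y ∈ solutionSpace τ (picardVessiotRing K U) (algebraMap K F ∘ a),
      differenceOperator τ m b y = 0) :
    b = 0 := by
  obtain ⟨S, hSR, hS⟩ := exists_subset_sum_tmul_iterate_eq_zero_iff hfix hτK hUdet hU hf
  have ha_tmul : ∑ i, algebraMap K F (a i) ⊗ₜ[K] τ^[(i : ℕ)] f = 0 := by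
    simp only [Algebra.algebraMap_eq_smul_one, TensorProduct.smul_tmul, ← TensorProduct.tmul_sum]
    simp only [Algebra.smul_def, hrel, TensorProduct.tmul_zero]
  have hb_tmul : ∑ i, b i ⊗ₜ[K] τ^[(i : ℕ)] f = 0 :=
    (hS m b).2 fun r hr => hb r ⟨hSR hr, (hS p _).1 ha_tmul r hr⟩
  have hind := Module.Flat.linearIndependent_one_tmul (S := F) hmin
  exact funext (Fintype.linearIndependent_iff.1 hind b
    (by simpa [TensorProduct.smul_tmul'] using hb_tmul))

theorem finrank_solutionSpace (hfix : ∀ x, τ x = x → x ∈ (algebraMap k F).range) {τK : K →+* K}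
    (hτK : ∀ x, τ (algebraMap K F x) = algebraMap K F (τK x)) {A : Matrix n n K}
    {U : Matrix n n F} (hUdet : U.det ≠ 0) (hU : U.map τ = A.map (algebraMap K F) * U) {f : F}
    (hf : f ∈ picardVessiotRing K U) {m : ℕ} {a : Fin (m + 1) → K} (ha : a ≠ 0)
    (hrel : ∑ i, algebraMap K F (a i) * τ^[(i : ℕ)] f = 0)
    (hmin : LinearIndependent K fun i : Fin m => τ^[(i : ℕ)] f) :
    Module.finrank k (solutionSpace τ (picardVessiotRing K U) (algebraMap K F ∘ a)) = m := by
  have ha' : algebraMap K F ∘ a ≠ 0 := fun h => ha (funext fun i => by simpa using congrFun h i)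
  have hrank := rank_solutionSpace_le hfix (picardVessiotRing K U) ha'
  have : Module.Finite k (solutionSpace τ (picardVessiotRing K U) (algebraMap K F ∘ a)) :=
    Module.rank_lt_aleph0_iff.1 (hrank.trans_lt Cardinal.natCast_lt_aleph0)
  exact le_antisymm (Module.finrank_le_of_rank_le hrank) <|
    le_finrank_of_forall_differenceOperator_eq_zero fun b hb =>
      eq_zero_of_differenceOperator_eq_zero_on_solutionSpace hfix hτK hUdet hU hf hrel hmin hb

end SolutionSpace

theorem linearIndependent_of_forall_sum_fin_ne_zero {F : Type*} [Field F] {K : Subfield F}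
    {v : ℕ → F} {m : ℕ}
    (hv : ∀ m' < m, ∀ b : Fin (m' + 1) → F, (∀ i, b i ∈ K) → (∃ i, b i ≠ 0) →
      ∑ i, b i * v i ≠ 0) :
    LinearIndependent K fun i : Fin m => v i := by
  rw [Fintype.linearIndependent_iff]
  intro g hg
  cases m with
  | zero => exact fun i => i.elim0
  | succ m' =>
    by_contra! hne
    obtain ⟨i, hi⟩ := hne
    exact hv m' m'.lt_succ_self (fun i => g i) (fun i => (g i).2) ⟨i, by simpa using hi⟩ hg

theorem solution_space_dimension_of_minimal_equation_general {F : Type*} [Field F] (τ : F →+* F)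
    {k : Subfield F} (hk : ∀ x, x ∈ k ↔ τ x = x) {K : Subfield F} (hkK : k ≤ K)
    (hτK : ∀ x ∈ K, τ x ∈ K) {n : Type*} [Fintype n] [DecidableEq n] {A U : Matrix n n F}
    (hA : ∀ i j, A i j ∈ K) (hUdet : U.det ≠ 0) (hU : U.map τ = A * U) {f : F}
    (hf : f ∈ picardVessiotRing K U) {m : ℕ} {a : Fin (m + 1) → F} (haK : ∀ i, a i ∈ K)
    (ha : a ≠ 0) (hrel : ∑ i, a i * τ^[(i : ℕ)] f = 0)
    (hmin : LinearIndependent K fun i : Fin m => τ^[(i : ℕ)] f) :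
    ∃ W : Submodule k F,
      (W : Set F) = {y | y ∈ picardVessiotRing K U ∧ ∑ i, a i * τ^[(i : ℕ)] y = 0} ∧
      Module.finrank k W = m := by
  let _ : Algebra k K := (Subfield.inclusion hkK).toAlgebra
  have : IsScalarTower k K F := .of_algebraMap_eq' rfl
  let τk : F →ₐ[k] F := { τ with commutes' := fun x => (hk x).1 x.2 }
  have hfix (x : F) (hx : τk x = x) : x ∈ (algebraMap k F).range := ⟨⟨x, (hk x).2 hx⟩, rfl⟩
  lift a to Fin (m + 1) → K using haK
  obtain ⟨A, rfl⟩ : ∃ A' : Matrix n n K, A'.map (algebraMap K F) = A :=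
    ⟨.of fun i j => ⟨A i j, hA i j⟩, rfl⟩
  have ha' : a ≠ 0 := by
    rintro rfl
    exact ha rfl
  exact ⟨_, coe_solutionSpace τk (picardVessiotRing K U) (algebraMap K F ∘ a),
    finrank_solutionSpace hfix (τK := τ.restrict K K hτK) (fun _ => rfl) hUdet hU hf ha' hrel hmin⟩

/-- If `f` in the Picard-Vessiot ring `R` satisfies a linear difference equation of minimal
order `m` over `K`, then the solutions of this equation in `R` form a `k`-vector space of
dimension exactly `m`. -/
theorem solution_space_dimension_of_minimal_equation
    (F : Type*) [Field F] (τ : F ≃+* F)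
    (k : Subfield F) (hk : ∀ a : F, a ∈ k ↔ τ a = a)
    (K : Subfield F) (hkK : (k : Set F) ⊆ (K : Set F)) (hτK : ∀ a : F, a ∈ K ↔ τ a ∈ K)
    (d : ℕ) (A U : Matrix (Fin d) (Fin d) F)
    (hA : ∀ i j, A i j ∈ K) (hAdet : A.det ≠ 0) (hUdet : U.det ≠ 0)
    (hU : U.map τ = A * U)
    (R : Subalgebra K F)
    (hR : R = Algebra.adjoin K
      ((Set.range fun p : Fin d × Fin d => U p.1 p.2) ∪ {(U.det)⁻¹}))
    (f : F) (hf : f ∈ R)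
    (m : ℕ) (a : Fin (m + 1) → F)
    (haK : ∀ i, a i ∈ K) (ham : a (Fin.last m) ≠ 0)
    (hrel : ∑ i : Fin (m + 1), a i * (⇑τ)^[(i : ℕ)] f = 0)
    (hmin : ∀ m' : ℕ, m' < m → ∀ b : Fin (m' + 1) → F, (∀ i, b i ∈ K) →
      (∃ i, b i ≠ 0) → ∑ i : Fin (m' + 1), b i * (⇑τ)^[(i : ℕ)] f ≠ 0) :
    ∃ W : Submodule k F,
      (W : Set F) = { y : F | y ∈ R ∧ ∑ i : Fin (m + 1), a i * (⇑τ)^[(i : ℕ)] y = 0 } ∧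
      Module.finrank k W = m := by
  subst hR
  exact solution_space_dimension_of_minimal_equation_general (τ : F →+* F) hk hkK
    (fun x => (hτK x).1) hA hUdet hU hf haK (fun h => ham (congrFun h _)) hrel
    (linearIndependent_of_forall_sum_fin_ne_zero (v := fun i => τ^[i] f) hmin)
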